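/- The Mordell–Weil group E(ℚ) of the elliptic curve E over ℚ defined by y² = x³ − 540x − 4752 (LMFDB label 576.e1) is isomorphic, as an abelian group, to ℤ × ℤ/2ℤ. -/

import Mathlib

/-!
Put `T = (-12, 0)` and `X = x + 12`, so that `E` becomes `y² = X(X² - 36X - 108)`. The square class
of `X` is a homomorphism on `E(ℚ)`; its values divide `6` up to squares, and the class `-1` is
excluded `3`-adically, which leaves the four classes of `O`, `T`, `P = (-14, 8)` and `P + T`. A
point whose `X` is a square is divisible by `2`: the obstruction is a square class on the
`2`-isogenous curve `y² = u(u² + 72u + 1728)`, where `2` is again excluded `3`-adically. Hence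
`E(ℚ)/2E(ℚ)` has four elements, and the theory of heights shows that `E(ℚ)` is finitely generated.
As `X` gets strictly larger `2`-adically under doubling once it is not integral, the only torsion
points are `O` and `T`, and the structure theorem for finitely generated abelian groups gives
rank `1`.
-/

/-- The elliptic curve over `ℚ` with LMFDB label 576.e1, `y² = x³ − 540x − 4752`. -/
noncomputable def E576e1 : WeierstrassCurve.Affine ℚ :=
  { a₁ := 0, a₂ := 0, a₃ := 0, a₄ := -540, a₆ := -4752 }

section FinitelyGeneratedAbelianGroups

theorem card_torsion_torsionFree_prod (A D : Type*) [AddCommGroup A] [IsAddTorsionFree A]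
    [AddCommGroup D] [Finite D] : Nat.card (AddCommGroup.torsion (A × D)) = Nat.card D := by
  have hA : AddCommGroup.torsion A = ⊥ :=
    AddCommGroup.isAddTorsionFree_iff_torsion_eq_bot.mp inferInstance
  have hD : AddCommGroup.torsion D = ⊤ :=
    AddCommGroup.torsion_eq_top_iff.mpr isAddTorsion_of_finite
  rw [AddCommGroup.torsion_sum, hA, hD,
    Nat.card_congr (AddSubgroup.prodEquiv _ _).toEquiv, Nat.card_prod]
  simp

theorem index_range_nsmul_prod (A D : Type*) [AddCommGroup A] [AddCommGroup D] (n : ℕ) :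
    (nsmulAddMonoidHom (α := A × D) n).range.index =
      (nsmulAddMonoidHom (α := A) n).range.index * (nsmulAddMonoidHom (α := D) n).range.index := by
  rw [← AddSubgroup.index_prod, ← AddMonoidHom.range_prodMap]
  rfl

theorem index_range_nsmul_of_card_eq_prime {D : Type*} [AddCommGroup D] {p : ℕ} [Fact p.Prime]
    (hD : Nat.card D = p) : (nsmulAddMonoidHom (α := D) p).range.index = p := by
  have := isAddCyclic_of_prime_card hD
  have : Finite D := Nat.finite_of_card_ne_zero (hD ▸ (Fact.out : p.Prime).ne_zero)
  rw [IsAddCyclic.index_nsmulAddMonoidHom_range, hD, Nat.gcd_self]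

theorem exists_addEquiv_pi_prod_finite (G : Type*) [AddCommGroup G] [AddGroup.FG G] :
    ∃ (r : ℕ) (D : Type) (_ : AddCommGroup D) (_ : Finite D),
      Nonempty (G ≃+ (Fin r → ℤ) × D) := by
  obtain ⟨r, ι, _, p, hp, e, ⟨f⟩⟩ := AddCommGroup.equiv_free_prod_directSum_zmod G
  have (i : ι) : NeZero (p i ^ e i) := ⟨pow_ne_zero _ (hp i).ne_zero⟩
  exact ⟨r, _, inferInstance,
    .of_equiv _ (DFinsupp.equivFunOnFintype (β := fun i ↦ ZMod (p i ^ e i))).symm,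
    ⟨f.trans (AddEquiv.prodCongr (Finsupp.linearEquivFunOnFinite ℤ ℤ (Fin r)).toAddEquiv
      (AddEquiv.refl _))⟩⟩

theorem nonempty_addEquiv_pi_prod_zmod {G : Type*} [AddCommGroup G] [AddGroup.FG G] {p : ℕ}
    [Fact p.Prime] {r : ℕ} (htors : Nat.card (AddCommGroup.torsion G) = p)
    (hindex : (nsmulAddMonoidHom (α := G) p).range.index = p ^ (r + 1)) :
    Nonempty (G ≃+ (Fin r → ℤ) × ZMod p) := by
  obtain ⟨s, D, _, _, ⟨f⟩⟩ := exists_addEquiv_pi_prod_finite G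
  have hD : Nat.card D = p := by
    rw [← card_torsion_torsionFree_prod (Fin s → ℤ) D, ← f.map_torsion, ← htors]
    exact (Nat.card_congr (f.addSubgroupMap _).toEquiv).symm
  have hs : s = r := by
    rw [← AddSubgroup.index_map_equiv _ f, f.map_range_nsmulAddMonoidHom, index_range_nsmul_prod,
      AddSubgroup.index_range_nsmul, Module.finrank_pi, Fintype.card_fin,
      index_range_nsmul_of_card_eq_prime hD, ← pow_succ] at hindex
    exact Nat.succ_injective (Nat.pow_right_injective (Fact.out : p.Prime).two_le hindex)
  subst hs
  exact ⟨f.trans (.prodCongr (.refl _) (addEquivOfPrimeCardEq hD (Nat.card_zmod p)))⟩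

end FinitelyGeneratedAbelianGroups

section AddSubMap

open WeierstrassCurve WeierstrassCurve.Affine WeierstrassCurve.Affine.Point

variable {K : Type*} [Field K] {W : WeierstrassCurve.Affine K}

theorem addSubMap_eval (W : WeierstrassCurve K) (s t u : K) :
    (fun i ↦ (addSubMap W i).eval ![s, t, u]) =
      ![s ^ 2 - W.b₄ * s * u - W.b₆ * t * u - W.b₈ * u ^ 2,
        2 * t * s + W.b₂ * s * u + W.b₄ * t * u + W.b₆ * u ^ 2,
        t ^ 2 - 4 * s * u] := by
  funext i
  fin_cases i <;> simp [addSubMap]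

theorem addSubMap_eval_sym2x_zero (P : W.Point) :
    (fun i ↦ (addSubMap W i).eval (P.sym2x 0)) = P.sym2x P := by
  rcases P with _ | ⟨x, y, h⟩
  · rw [← zero_def, sym2x_zero_zero, addSubMap_eval]
    simp
  · rw [sym2x_some_zero, sym2x_some_some, addSubMap_eval]
    ring_nf

theorem sub_negY_sq {x y : K} (h : W.Equation x y) :
    (y - W.negY x y) ^ 2 = 4 * x ^ 3 + W.b₂ * x ^ 2 + 2 * W.b₄ * x + W.b₆ := by
  rw [equation_iff] at h
  simp only [negY, b₂, b₄, b₆]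
  linear_combination 4 * h

variable [DecidableEq K]

theorem sq_mul_addX_self {x y : K} (h : W.Equation x y) (hy : y ≠ W.negY x y) :
    (y - W.negY x y) ^ 2 * W.addX x x (W.slope x x y y) =
      x ^ 4 - W.b₄ * x ^ 2 - 2 * W.b₆ * x - W.b₈ := by
  rw [slope_of_Y_ne rfl hy]
  have hD : y - W.negY x y ≠ 0 := sub_ne_zero.mpr hy
  set D := y - W.negY x y with hDdef
  rw [equation_iff] at h
  simp only [addX, b₄, b₆, b₈]
  field_simp
  simp only [negY] at hDdef
  rw [hDdef]
  linear_combination (-W.a₁ ^ 2 - 4 * W.a₂ - 8 * x) * h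

theorem sq_sub_mul_addX_addX_negY {x₁ y₁ x₂ y₂ : K} (h₁ : W.Equation x₁ y₁) (h₂ : W.Equation x₂ y₂)
    (hx : x₁ ≠ x₂) :
    (x₁ - x₂) ^ 2 * (W.addX x₁ x₂ (W.slope x₁ x₂ y₁ y₂) +
        W.addX x₁ x₂ (W.slope x₁ x₂ y₁ (W.negY x₂ y₂))) =
      2 * (x₁ + x₂) * (x₁ * x₂) + W.b₂ * (x₁ * x₂) + W.b₄ * (x₁ + x₂) + W.b₆ ∧
    (x₁ - x₂) ^ 2 * (W.addX x₁ x₂ (W.slope x₁ x₂ y₁ y₂) *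
        W.addX x₁ x₂ (W.slope x₁ x₂ y₁ (W.negY x₂ y₂))) =
      (x₁ * x₂) ^ 2 - W.b₄ * (x₁ * x₂) - W.b₆ * (x₁ + x₂) - W.b₈ := by
  have hd : x₁ - x₂ ≠ 0 := sub_ne_zero.mpr hx
  rw [slope_of_X_ne hx, slope_of_X_ne hx]
  rw [equation_iff] at h₁ h₂
  set u := (y₁ - y₂) / (x₁ - x₂) with hu
  set v := (y₁ - W.negY x₂ y₂) / (x₁ - x₂) with hv
  have hsum : (x₁ - x₂) * (u + v) = 2 * y₁ + W.a₁ * x₂ + W.a₃ := by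
    rw [hu, hv, negY]
    field_simp
    ring
  have hprod : (x₁ - x₂) * (u * v) =
      x₁ ^ 2 + x₁ * x₂ + x₂ ^ 2 + W.a₂ * (x₁ + x₂) + W.a₄ - W.a₁ * y₁ := by
    rw [hu, hv, negY]
    field_simp
    linear_combination h₁ - h₂
  simp only [addX, b₂, b₄, b₆, b₈]
  constructor
  · linear_combination ((x₁ - x₂) * (u + v) + (2 * y₁ + W.a₁ * x₂ + W.a₃) + W.a₁ * (x₁ - x₂)) * hsum
      - 2 * (x₁ - x₂) * hprod + 4 * h₁
  · linear_combination ((x₁ - x₂) * (u * v) +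
        (x₁ ^ 2 + x₁ * x₂ + x₂ ^ 2 + W.a₂ * (x₁ + x₂) + W.a₄ - W.a₁ * y₁) +
        W.a₁ * ((x₁ - x₂) * (u + v)) + 2 * (W.a₂ + x₁ + x₂) * (x₁ - x₂) +
        W.a₁ ^ 2 * (x₁ - x₂)) * hprod +
      (W.a₁ * (x₁ ^ 2 + x₁ * x₂ + x₂ ^ 2 + W.a₂ * (x₁ + x₂) + W.a₄ - W.a₁ * y₁) -
        (W.a₂ + x₁ + x₂) * ((x₁ - x₂) * (u + v) + (2 * y₁ + W.a₁ * x₂ + W.a₃)) -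
        W.a₁ * (W.a₂ + x₁ + x₂) * (x₁ - x₂)) * hsum +
      (-W.a₁ ^ 2 - 4 * (W.a₂ + x₁ + x₂)) * h₁

theorem exists_addSubMap_eval_sym2x_self [W.IsElliptic] (P : W.Point) :
    ∃ c : K, c ≠ 0 ∧ (fun i ↦ (addSubMap W i).eval (P.sym2x P)) = c • (P + P).sym2x 0 := by
  rcases P with _ | ⟨x, y, h⟩
  · exact ⟨1, one_ne_zero, by rw [← zero_def, addSubMap_eval_sym2x_zero, add_zero, one_smul]⟩
  have heval : (fun i ↦ (addSubMap W i).eval ((some x y h).sym2x (some x y h))) =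
      ![x ^ 4 - W.b₄ * x ^ 2 - 2 * W.b₆ * x - W.b₈, (y - W.negY x y) ^ 2, 0] := by
    rw [sym2x_some_some, addSubMap_eval, sub_negY_sq h.1]
    ring_nf
  by_cases hy : y = W.negY x y
  · refine ⟨x ^ 4 - W.b₄ * x ^ 2 - 2 * W.b₆ * x - W.b₈, fun hc ↦ ?_, ?_⟩
    · refine addSubMap_ne_zero W (sym2x_ne_zero (some x y h) (some x y h)) ?_
      rw [heval, hc, sub_eq_zero.mpr hy]
      simp
    · rw [add_self_of_Y_eq hy, sym2x_zero_zero, heval, sub_eq_zero.mpr hy]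
      simp
  · refine ⟨(y - W.negY x y) ^ 2, pow_ne_zero 2 (sub_ne_zero.mpr hy), ?_⟩
    rw [add_self_of_Y_ne hy, sym2x_some_zero, heval, ← sq_mul_addX_self h.1 hy]
    simp

theorem exists_addSubMap_eval_sym2x [W.IsElliptic] (P Q : W.Point) :
    ∃ c : K, c ≠ 0 ∧ (fun i ↦ (addSubMap W i).eval (P.sym2x Q)) = c • (P + Q).sym2x (P - Q) := by
  by_cases hPQ : P = Q ∨ P = -Q
  · rcases hPQ with rfl | rfl
    · simpa only [sub_self] using exists_addSubMap_eval_sym2x_self P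
    · rw [neg_add_cancel, sym2x_neg_left, ← neg_add', sym2x_neg_right, sym2x_comm 0]
      exact exists_addSubMap_eval_sym2x_self Q
  rcases P with _ | ⟨x₁, y₁, h₁⟩
  · exact ⟨1, one_ne_zero, by rw [← zero_def, zero_add, zero_sub, sym2x_neg_right, sym2x_comm,
      addSubMap_eval_sym2x_zero, one_smul]⟩
  rcases Q with _ | ⟨x₂, y₂, h₂⟩
  · exact ⟨1, one_ne_zero, by rw [← zero_def, add_zero, sub_zero, addSubMap_eval_sym2x_zero,
      one_smul]⟩
  have hx : x₁ ≠ x₂ := mt X_eq_iff.mp hPQ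
  obtain ⟨hsum, hprod⟩ := sq_sub_mul_addX_addX_negY h₁.1 h₂.1 hx
  refine ⟨(x₁ - x₂) ^ 2, pow_ne_zero 2 (sub_ne_zero.mpr hx), ?_⟩
  rw [sub_eq_add_neg (some x₁ y₁ h₁), neg_some, add_of_X_ne hx, add_of_X_ne hx, sym2x_some_some,
    sym2x_some_some, addSubMap_eval]
  simp only [Matrix.smul_cons, Matrix.smul_empty, smul_eq_mul, hsum, hprod]
  ring_nf

end AddSubMap

section NaiveHeight

open Height WeierstrassCurve WeierstrassCurve.Affine WeierstrassCurve.Affine.Point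

variable {K : Type*} [Field K] {W : WeierstrassCurve.Affine K}

theorem finite_setOf_xRep_eq (v : Fin 2 → K) : {P : W.Point | P.xRep = v}.Finite := by
  rcases Set.eq_empty_or_nonempty {P : W.Point | P.xRep = v} with hempty | ⟨P, hP⟩
  · exact hempty ▸ Set.finite_empty
  · exact (Set.toFinite {P, -P}).subset fun Q hQ ↦ xRep_eq_xRep_iff.mp (hQ.trans hP.symm)

variable [AdmissibleAbsValues K]

/-- The naive (logarithmic) height of a point on a Weierstrass curve: the height of its
`x`-coordinate, viewed as a point of the projective line. -/
noncomputable def naiveHeight (P : W.Point) : ℝ :=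
  logHeight P.xRep

theorem exists_abs_logHeight_sym2x_sub_le (W : WeierstrassCurve.Affine K) :
    ∃ C, ∀ P Q : W.Point, |logHeight (P.sym2x Q) - (naiveHeight P + naiveHeight Q)| ≤ C := by
  obtain ⟨C, hC⟩ := abs_logHeight_sym2_sub_le K
  have hxRep (P : W.Point) : P.xRep = ![P.xRep 0, P.xRep 1] := by
    funext i
    fin_cases i <;> rfl
  refine ⟨C, fun P Q ↦ ?_⟩
  rw [naiveHeight, naiveHeight, hxRep P, hxRep Q]
  exact hC (hxRep P ▸ xRep_ne_zero P) (hxRep Q ▸ xRep_ne_zero Q)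

instance [Northcott (logHeight₁ (K := K))] : Northcott (naiveHeight (W := W)) where
  finite_le b := by
    have hx : {x : K | logHeight₁ x ≤ b}.Finite := Northcott.finite_le b
    refine ((Set.finite_singleton 0).union
      (hx.biUnion fun x _ ↦ finite_setOf_xRep_eq ![x, 1])).subset ?_
    rintro (_ | ⟨x, y, h⟩) hP
    · exact .inl rfl
    · refine .inr (Set.mem_biUnion (x := x) ?_ (xRep_some h))
      simpa [naiveHeight, logHeight₁_eq_logHeight] using hP

variable [DecidableEq K]

theorem exists_abs_naiveHeight_parallelogram_le (W : WeierstrassCurve.Affine K) [W.IsElliptic] :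
    ∃ C, ∀ P Q : W.Point, |naiveHeight (P + Q) + naiveHeight (P - Q) -
      2 * (naiveHeight P + naiveHeight Q)| ≤ C := by
  obtain ⟨C₁, hC₁⟩ := abs_logHeight_addSubMap_sub_two_mul_logHeight_le W
  obtain ⟨C₂, hC₂⟩ := exists_abs_logHeight_sym2x_sub_le W
  refine ⟨C₁ + 3 * C₂, fun P Q ↦ ?_⟩
  obtain ⟨c, hc, heval⟩ := exists_addSubMap_eval_sym2x P Q
  have hmap := hC₁ (P.sym2x Q)
  rw [heval, logHeight_smul_eq_logHeight _ hc] at hmap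
  have hPQ := hC₂ P Q
  have hadd_sub := hC₂ (P + Q) (P - Q)
  rw [abs_le] at *
  constructor <;> linarith

theorem fg_of_finiteIndex_range_two_nsmul [W.IsElliptic] [Northcott (logHeight₁ (K := K))]
    (h : (nsmulAddMonoidHom (α := W.Point) 2).range.FiniteIndex) : AddGroup.FG W.Point := by
  obtain ⟨C, hC⟩ := exists_abs_naiveHeight_parallelogram_le W
  exact AddCommGroup.fg_of_descent' (h := naiveHeight) h (fun P ↦ logHeight_nonneg P.xRep) hC

end NaiveHeight

section TwoDescent

open WeierstrassCurve WeierstrassCurve.Affine WeierstrassCurve.Affine.Point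

variable {F : Type*} [Field F]

theorem isSquare_mul_iff_quotient_eq {a b : F} (ha : a ≠ 0) (hb : b ≠ 0) :
    (Units.mk0 a ha : Fˣ ⧸ Subgroup.square Fˣ) = Units.mk0 b hb ↔ IsSquare (a * b) := by
  rw [QuotientGroup.eq, Subgroup.mem_square]
  constructor
  · rintro ⟨c, hc⟩
    refine ⟨a * c, ?_⟩
    have h := congrArg Units.val hc
    simp only [Units.val_mul, Units.val_inv_eq_inv_val, Units.val_mk0] at h
    field_simp at h
    linear_combination a * h
  · rintro ⟨c, hc⟩
    have hc0 : c ≠ 0 := by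
      rintro rfl
      simp_all
    refine ⟨Units.mk0 (c / a) (div_ne_zero hc0 ha), ?_⟩
    ext
    simp only [Units.val_mul, Units.val_inv_eq_inv_val, Units.val_mk0]
    field_simp
    linear_combination hc

variable {W : WeierstrassCurve.Affine F} {e : F}

variable (W e) in
/-- The coefficient `A` of the model `y² = X(X² + AX + B)` obtained from a Weierstrass curve
`y² = x³ + a₂x² + a₄x + a₆` by the substitution `X = x - e`, where `(e, 0)` is on the curve. -/
def shiftA : F :=
  3 * e + W.a₂

variable (W e) in
/-- The coefficient `B` of the model `y² = X(X² + AX + B)` obtained from a Weierstrass curve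
`y² = x³ + a₂x² + a₄x + a₆` by the substitution `X = x - e`, where `(e, 0)` is on the curve. -/
def shiftB : F :=
  3 * e ^ 2 + 2 * W.a₂ * e + W.a₄

section

variable [W.IsCharNeTwoNF]

theorem negY_eq_neg (x y : F) : W.negY x y = -y := by
  simp [negY]

theorem equation_zero_iff : W.Equation e 0 ↔ e ^ 3 + W.a₂ * e ^ 2 + W.a₄ * e + W.a₆ = 0 := by
  simp [equation_iff, eq_comm]

theorem equation_iff_shift (he : W.Equation e 0) {x y : F} :
    W.Equation x y ↔
      y ^ 2 = (x - e) * ((x - e) ^ 2 + shiftA W e * (x - e) + shiftB W e) := by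
  rw [equation_zero_iff] at he
  simp only [equation_iff, a₁_of_isCharNeTwoNF, a₃_of_isCharNeTwoNF, shiftA, shiftB]
  constructor <;> intro h
  · linear_combination h + he
  · linear_combination h - he

theorem sq_eq_quartic (he : W.Equation e 0) {r s x y : F} (h : W.Equation x y) (hr : r ≠ 0)
    (hx : x - e = r ^ 2) (hy : y = r * s) :
    s ^ 2 = r ^ 4 + shiftA W e * r ^ 2 + shiftB W e := by
  rw [equation_iff_shift he, hx, hy] at h
  refine mul_left_cancel₀ (pow_ne_zero 2 hr) ?_
  linear_combination h

theorem shiftB_ne_zero (he : W.Nonsingular e 0) : shiftB W e ≠ 0 := by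
  have h := ((W.nonsingular_iff _ _).mp he).2
  simp only [a₁_of_isCharNeTwoNF, a₃_of_isCharNeTwoNF] at h
  rw [shiftB]
  grind

theorem some_eq_twoTorsion_iff (he : W.Nonsingular e 0) {x y : F} (h : W.Nonsingular x y) :
    some x y h = some e 0 he ↔ x = e := by
  refine ⟨fun hT ↦ (Point.some.inj hT).1, ?_⟩
  rintro rfl
  have hy := (equation_iff_shift he.1).mp h.1
  simp_all

end

variable [DecidableEq F]

variable (W e) in
/-- A representative in `F` of the square class attached to a point by the descent map `x ↦ x - e`.
At the zero `(e, 0)` of `x - e` the value is `B`, as multiplicativity forces. -/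
def descentValue : W.Point → F
  | 0 => 1
  | Point.some x _ _ => if x = e then shiftB W e else x - e

@[simp]
theorem descentValue_zero : descentValue W e 0 = 1 :=
  rfl

@[simp]
theorem descentValue_some_self {y : F} (h : W.Nonsingular e y) :
    descentValue W e (some e y h) = shiftB W e :=
  if_pos rfl

theorem descentValue_some_of_ne {x y : F} (h : W.Nonsingular x y) (hx : x ≠ e) :
    descentValue W e (some x y h) = x - e :=
  if_neg hx

@[simp]
theorem descentValue_neg (P : W.Point) : descentValue W e (-P) = descentValue W e P := by
  cases P <;> rfl

variable [W.IsCharNeTwoNF]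

theorem mul_addX_slope_sub (he : W.Equation e 0) {x₁ y₁ x₂ y₂ : F} (h₁ : W.Equation x₁ y₁)
    (h₂ : W.Equation x₂ y₂) (hxy : ¬(x₁ = x₂ ∧ y₁ = W.negY x₂ y₂)) :
    (x₁ - e) * (x₂ - e) * (W.addX x₁ x₂ (W.slope x₁ x₂ y₁ y₂) - e) =
      (y₁ + W.slope x₁ x₂ y₁ y₂ * (e - x₁)) ^ 2 := by
  have h := congrArg (Polynomial.eval e) (addPolynomial_slope h₁ h₂ hxy)
  rw [equation_zero_iff] at he
  simp only [addPolynomial_eq, Cubic.toPoly, Polynomial.eval_neg, Polynomial.eval_add,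
    Polynomial.eval_mul, Polynomial.eval_pow, Polynomial.eval_C, Polynomial.eval_X,
    Polynomial.eval_sub, a₁_of_isCharNeTwoNF, a₃_of_isCharNeTwoNF] at h
  linear_combination -h - he

theorem sq_mul_addX_self_sub (he : W.Equation e 0) {x y : F} (h : W.Equation x y)
    (hy : y ≠ W.negY x y) :
    (2 * y) ^ 2 * (W.addX x x (W.slope x x y y) - e) = ((x - e) ^ 2 - shiftB W e) ^ 2 := by
  rw [equation_zero_iff] at he
  rw [equation_iff] at h
  rw [slope_of_Y_ne rfl hy]
  have hy2 : (2 * y) ≠ 0 := by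
    rw [negY_eq_neg] at hy
    grind
  have hD : y - W.negY x y = 2 * y := by rw [negY_eq_neg]; ring
  rw [hD]
  simp only [addX, shiftB, a₁_of_isCharNeTwoNF, a₃_of_isCharNeTwoNF] at h ⊢
  set z := 2 * y with hz
  field_simp
  rw [hz]
  linear_combination 4 * (- e - W.a₂ - 2 * x) * h - 4 * (2 * x + W.a₂ + e) * he

theorem descentValue_ne_zero (he : W.Nonsingular e 0) (P : W.Point) : descentValue W e P ≠ 0 := by
  rcases P with _ | ⟨x, y, h⟩
  · exact one_ne_zero
  · rw [descentValue]
    split_ifs with hx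
    · exact shiftB_ne_zero he
    · exact sub_ne_zero.mpr hx

theorem add_self_twoTorsion (he : W.Nonsingular e 0) : some e 0 he + some e 0 he = 0 :=
  add_self_of_Y_eq (by rw [negY_eq_neg, _root_.neg_zero])

theorem descentValue_mul_add_twoTorsion (he : W.Nonsingular e 0) (P : W.Point) :
    descentValue W e P * descentValue W e (P + some e 0 he) = shiftB W e := by
  rcases P with _ | ⟨x, y, h⟩
  · rw [← zero_def, zero_add, descentValue_zero, descentValue_some_self, one_mul]
  by_cases hx : x = e
  · rw [(some_eq_twoTorsion_iff he h).mpr hx, add_self_twoTorsion, descentValue_some_self,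
      descentValue_zero, mul_one]
  have hx0 : x - e ≠ 0 := sub_ne_zero.mpr hx
  have hmul : (x - e) * (W.addX x e (W.slope x e y 0) - e) = shiftB W e := by
    have hxy := (equation_iff_shift he.1).mp h.1
    rw [slope_of_X_ne hx, addX, a₁_of_isCharNeTwoNF]
    field_simp
    rw [shiftA] at hxy
    linear_combination hxy
  rw [add_of_X_ne hx, descentValue_some_of_ne h hx, descentValue_some_of_ne, hmul]
  intro hadd
  rw [hadd, sub_self, mul_zero] at hmul
  exact shiftB_ne_zero he hmul.symm

theorem isSquare_descentValue_mul_mul_add (he : W.Nonsingular e 0) (P Q : W.Point) :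
    IsSquare (descentValue W e P * descentValue W e Q * descentValue W e (P + Q)) := by
  have hT (P : W.Point) : IsSquare (descentValue W e P * shiftB W e *
      descentValue W e (P + some e 0 he)) :=
    ⟨shiftB W e, by rw [mul_right_comm, descentValue_mul_add_twoTorsion]⟩
  rcases P with _ | ⟨x₁, y₁, h₁⟩
  · exact ⟨descentValue W e Q, by rw [← zero_def, zero_add, descentValue_zero, one_mul]⟩
  rcases Q with _ | ⟨x₂, y₂, h₂⟩
  · exact ⟨descentValue W e (some x₁ y₁ h₁), by
      rw [← zero_def, add_zero, descentValue_zero, mul_one]⟩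
  by_cases hx₁ : x₁ = e
  · rw [(some_eq_twoTorsion_iff he h₁).mpr hx₁, descentValue_some_self, mul_comm (shiftB W e),
      add_comm]
    exact hT _
  by_cases hx₂ : x₂ = e
  · rw [(some_eq_twoTorsion_iff he h₂).mpr hx₂, descentValue_some_self]
    exact hT _
  by_cases hxy : x₁ = x₂ ∧ y₁ = W.negY x₂ y₂
  · obtain ⟨rfl, hy⟩ := hxy
    rw [add_of_Y_eq rfl hy, descentValue_zero, mul_one, descentValue_some_of_ne h₁ hx₁,
      descentValue_some_of_ne h₂ hx₂]
    exact .mul_self _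
  have hadd := mul_addX_slope_sub he.1 h₁.1 h₂.1 hxy
  rw [add_some hxy, descentValue_some_of_ne h₁ hx₁, descentValue_some_of_ne h₂ hx₂]
  by_cases hx₃ : W.addX x₁ x₂ (W.slope x₁ x₂ y₁ y₂) = e
  · have hP : some x₁ y₁ h₁ = -some x₂ y₂ h₂ + some e 0 he := by
      rw [eq_neg_add_iff_add_eq, add_comm, add_some hxy, some_eq_twoTorsion_iff, hx₃]
    have hPQ := descentValue_mul_add_twoTorsion he (-some x₂ y₂ h₂)
    rw [← hP, descentValue_neg, descentValue_some_of_ne h₁ hx₁, descentValue_some_of_ne h₂ hx₂]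
      at hPQ
    rw [mul_comm (x₁ - e), hPQ, descentValue, if_pos hx₃]
    exact .mul_self _
  · rw [descentValue_some_of_ne _ hx₃, hadd]
    exact .sq _

theorem isSquare_mul_descentValue_add (he : W.Nonsingular e 0) {P Q : W.Point} {a b : F}
    (hP : IsSquare (a * descentValue W e P)) (hQ : IsSquare (b * descentValue W e Q)) :
    IsSquare (a * b * descentValue W e (P + Q)) := by
  have hd := mul_ne_zero (descentValue_ne_zero he P) (descentValue_ne_zero he Q)
  obtain ⟨w, hw⟩ := (hP.mul hQ).mul (isSquare_descentValue_mul_mul_add he P Q)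
  refine ⟨w / (descentValue W e P * descentValue W e Q), ?_⟩
  rw [div_mul_div_comm, ← hw, eq_div_iff (mul_ne_zero hd hd)]
  ring

theorem isSquare_descentValue_add_self (he : W.Nonsingular e 0) (P : W.Point) :
    IsSquare (descentValue W e (P + P)) := by
  have hd := mul_ne_zero (descentValue_ne_zero he P) (descentValue_ne_zero he P)
  rw [← mul_div_cancel_left₀ (descentValue W e (P + P)) hd]
  exact (isSquare_descentValue_mul_mul_add he P P).div (.mul_self _)

/-- The `2`-descent homomorphism `P ↦ x(P) - e` to the group of square classes, attached to the
`2`-torsion point `(e, 0)`. -/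
def descentHom (he : W.Nonsingular e 0) : W.Point →+ Additive (Fˣ ⧸ Subgroup.square Fˣ) :=
  AddMonoidHom.mk' (fun P ↦ .ofMul (Units.mk0 _ (descentValue_ne_zero he P))) fun P Q ↦ by
    rw [← ofMul_mul, ← QuotientGroup.mk_mul, ← Units.mk0_mul _ _
      (mul_ne_zero (descentValue_ne_zero he P) (descentValue_ne_zero he Q))]
    refine congrArg Additive.ofMul ((isSquare_mul_iff_quotient_eq _ _).mpr ?_)
    rw [mul_comm]
    exact isSquare_descentValue_mul_mul_add he P Q

theorem descentHom_eq_iff (he : W.Nonsingular e 0) {P Q : W.Point} :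
    descentHom he P = descentHom he Q ↔ IsSquare (descentValue W e P * descentValue W e Q) :=
  isSquare_mul_iff_quotient_eq _ _

theorem exists_two_nsmul_eq_some [NeZero (2 : F)] (he : W.Nonsingular e 0) {x y : F}
    (h : W.Nonsingular x y) {r s w : F} (hr : r ≠ 0) (hw : w ≠ 0) (hx : x - e = r ^ 2)
    (hy : y = r * s) (hrsw : w ^ 2 = 2 * r ^ 2 + shiftA W e + 2 * s) :
    ∃ S : W.Point, 2 • S = some x y h := by
  have h2 : (2 : F) ≠ 0 := two_ne_zero
  have hs := sq_eq_quartic he.1 h.1 hr hx hy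
  obtain ⟨X, hX⟩ : ∃ X, 2 * X = w ^ 2 - shiftA W e + 2 * r * w :=
    ⟨(w ^ 2 - shiftA W e + 2 * r * w) / 2, by field_simp⟩
  have hXB : X * (w ^ 2 - shiftA W e - X) = shiftB W e := by
    refine mul_left_cancel₀ (pow_ne_zero 2 h2) ?_
    linear_combination (w ^ 2 - shiftA W e - 2 * X - 2 * r * w) * hX + 4 * hs +
      (w ^ 2 - shiftA W e - 2 * r ^ 2 + 2 * s) * hrsw
  have hX0 : X ≠ 0 := left_ne_zero_of_mul (hXB ▸ shiftB_ne_zero he)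
  have hS : W.Equation (X + e) (w * X) := by
    rw [equation_iff_shift he.1]
    linear_combination X * hXB
  have hy2 : 2 * (w * X) ≠ 0 := mul_ne_zero h2 (mul_ne_zero hw hX0)
  have hneg : w * X ≠ W.negY (X + e) (w * X) := by
    rw [negY_eq_neg, ← sub_ne_zero, sub_neg_eq_add, ← two_mul]
    exact hy2
  have hdouble : W.addX (X + e) (X + e) (W.slope (X + e) (X + e) (w * X) (w * X)) = x := by
    rw [← sub_left_inj (a := e), hx]
    refine mul_left_cancel₀ (pow_ne_zero 2 hy2) ?_
    rw [sq_mul_addX_self_sub he.1 hS hneg]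
    have hXr : X ^ 2 - shiftB W e = X * (2 * r * w) := by linear_combination X * hX + hXB
    rw [add_sub_cancel_right, hXr]
    ring
  set S : W.Point :=
    some (X + e) (w * X) ((W.nonsingular_iff _ _).mpr ⟨hS, .inr hneg⟩) with hSdef
  have hSS : S + S = some x y h ∨ S + S = -some x y h := by
    rw [hSdef, add_self_of_Y_ne hneg]
    exact X_eq_iff.mp hdouble
  rcases hSS with hSS | hSS
  · exact ⟨S, by rw [two_nsmul, hSS]⟩
  · exact ⟨-S, by rw [two_nsmul, ← neg_add, hSS, neg_neg]⟩

theorem add_self_eq_zero_iff [NeZero (2 : F)] (he : W.Nonsingular e 0)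
    (hdisc : ¬IsSquare (shiftA W e ^ 2 - 4 * shiftB W e)) {P : W.Point} :
    P + P = 0 ↔ P = 0 ∨ P = some e 0 he := by
  refine ⟨fun hP ↦ ?_, ?_⟩
  · rcases P with _ | ⟨x, y, h⟩
    · exact .inl rfl
    rw [some_eq_twoTorsion_iff]
    right
    have hy : y = 0 := by
      by_contra hy
      refine some_ne_zero _ ((add_self_of_Y_ne ?_).symm.trans hP)
      rwa [negY_eq_neg, Ne, eq_neg_iff_add_eq_zero, ← two_mul, mul_eq_zero_iff_left two_ne_zero]
    have hxy := (equation_iff_shift he.1).mp h.1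
    rw [hy, zero_pow two_ne_zero, zero_eq_mul] at hxy
    refine sub_eq_zero.mp (hxy.resolve_right fun hquad ↦ hdisc ⟨2 * (x - e) + shiftA W e, ?_⟩)
    linear_combination -4 * hquad
  · rintro (rfl | rfl)
    · exact add_zero 0
    · exact add_self_twoTorsion he

end TwoDescent

section TwoAdicTorsion

open WeierstrassCurve WeierstrassCurve.Affine WeierstrassCurve.Affine.Point

variable {F Γ₀ : Type*} [Field F] [LinearOrderedCommGroupWithZero Γ₀] {v : Valuation F Γ₀}

theorem valuation_quadratic_eq_max {a b c x : F} (hc : v c < 1) (ha : v a ≤ v c ^ 2)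
    (hb : v b = v c ^ 2) (hx : v x ≠ v c) :
    v (x ^ 2 + a * x + b) = max (v x ^ 2) (v c ^ 2) := by
  have hax : v (a * x) ≤ v c ^ 2 * v x := by
    rw [map_mul]
    exact mul_le_mul_left ha _
  rcases hx.lt_or_gt with hlt | hgt
  · have hsq : v x ^ 2 < v c ^ 2 := pow_lt_pow_left₀ hlt zero_le two_ne_zero
    have hsmall : v (x ^ 2 + a * x) < v b := by
      rw [hb]
      refine v.map_add_lt (by rwa [map_pow]) (hax.trans_lt ?_)
      exact mul_lt_of_lt_one_right (zero_le.trans_lt hsq) (hlt.trans hc)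
    rw [v.map_add_eq_of_lt_right hsmall, hb, max_eq_right hsq.le]
  · have hx0 : 0 < v x := zero_le.trans_lt hgt
    have hsq : v c ^ 2 < v x ^ 2 := pow_lt_pow_left₀ hgt zero_le two_ne_zero
    have hcx : v c ^ 2 < v x := (pow_le_of_le_one zero_le hc.le two_ne_zero).trans_lt hgt
    have hsmall : v (a * x + b) < v (x ^ 2) := by
      rw [map_pow]
      refine v.map_add_lt (hax.trans_lt ?_) (hb.trans_lt hsq)
      rw [sq (v x)]
      exact mul_lt_mul_of_pos_right hcx hx0
    rw [add_assoc, v.map_add_eq_of_lt_left hsmall, map_pow, max_eq_left hsq.le]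

variable [DecidableEq F] {W : WeierstrassCurve.Affine F} [W.IsCharNeTwoNF] {e : F}

theorem valuation_descentValue_add_self (he : W.Nonsingular e 0) (hv2 : v 2 < 1)
    (hA : v (shiftA W e) ≤ v 2 ^ 2) (hB : v (shiftB W e) = v 2 ^ 2) {P : W.Point}
    (hPP : P + P ≠ 0) (hP : v (descentValue W e P) ≠ v 2) :
    v 2 ^ 2 * v (descentValue W e P) * v (descentValue W e (P + P)) =
      max (v (descentValue W e P) ^ 2) (v 2 ^ 2) := by
  rcases P with _ | ⟨x, y, h⟩
  · exact absurd (add_zero 0) hPP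
  have hx : x ≠ e := by
    intro hx
    rw [(some_eq_twoTorsion_iff he h).mpr hx] at hPP
    exact hPP (add_self_twoTorsion he)
  have hy : y ≠ W.negY x y := fun hy ↦ hPP (add_self_of_Y_eq hy)
  rw [descentValue_some_of_ne h hx] at hP ⊢
  have hplus := valuation_quadratic_eq_max hv2 hA hB hP
  have hminus : v ((x - e) ^ 2 - shiftB W e) = max (v (x - e) ^ 2) (v 2 ^ 2) := by
    simpa [sub_eq_add_neg] using valuation_quadratic_eq_max (a := 0) (b := -shiftB W e) hv2
      (by simp) (by rw [Valuation.map_neg, hB]) hP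
  have hmax : max (v (x - e) ^ 2) (v 2 ^ 2) ≠ 0 :=
    (zero_lt_iff.mpr (hB ▸ v.ne_zero_iff.mpr (shiftB_ne_zero he))).trans_le
      (le_max_right _ _) |>.ne'
  have hdouble := sq_mul_addX_self_sub he.1 h.1 hy
  rw [mul_pow, (equation_iff_shift he.1).mp h.1] at hdouble
  have hdx : W.addX x x (W.slope x x y y) ≠ e := by
    intro hdx
    rw [hdx, sub_self, mul_zero, eq_comm, sq_eq_zero_iff] at hdouble
    rw [hdouble, _root_.map_zero] at hminus
    exact hmax hminus.symm
  rw [add_self_of_Y_ne hy, descentValue_some_of_ne _ hdx]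
  refine mul_right_cancel₀ hmax ?_
  have := congrArg v hdouble
  simp only [map_mul, map_pow, hplus, hminus] at this
  rw [← sq, ← this]
  ac_rfl

theorem one_lt_valuation_descentValue_add_self (he : W.Nonsingular e 0) (hv2 : v 2 < 1)
    (hA : v (shiftA W e) ≤ v 2 ^ 2) (hB : v (shiftB W e) = v 2 ^ 2) {P : W.Point}
    (hPP : P + P ≠ 0) (hP : v (descentValue W e P) ≠ v 2) :
    1 < v (descentValue W e (P + P)) := by
  have hmax := valuation_descentValue_add_self he hv2 hA hB hPP hP
  by_contra! hle
  have hmul : max (v (descentValue W e P) ^ 2) (v 2 ^ 2) ≤ v 2 ^ 2 * v (descentValue W e P) :=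
    hmax ▸ mul_le_of_le_one_right' hle
  have hd := zero_lt_iff.mpr (v.ne_zero_iff.mpr (descentValue_ne_zero he P))
  have h2 : 0 < v 2 ^ 2 := zero_lt_iff.mpr (hB ▸ v.ne_zero_iff.mpr (shiftB_ne_zero he))
  have hge : 1 ≤ v (descentValue W e P) :=
    (le_mul_iff_one_le_right h2).mp ((le_max_right _ _).trans hmul)
  have hle' : v (descentValue W e P) ≤ v 2 ^ 2 := by
    rw [← mul_le_mul_iff_left₀ hd, ← sq]
    exact (le_max_left _ _).trans hmul
  exact (hge.trans hle').not_gt (pow_lt_one₀ zero_le hv2 two_ne_zero)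

theorem valuation_descentValue_lt_add_self (he : W.Nonsingular e 0) (hv2 : v 2 < 1)
    (hA : v (shiftA W e) ≤ v 2 ^ 2) (hB : v (shiftB W e) = v 2 ^ 2) {P : W.Point}
    (hPP : P + P ≠ 0) (hP : 1 < v (descentValue W e P)) :
    v (descentValue W e P) < v (descentValue W e (P + P)) := by
  have hmax := valuation_descentValue_add_self he hv2 hA hB hPP (hv2.trans hP).ne'
  have hd := zero_lt_iff.mpr (v.ne_zero_iff.mpr (descentValue_ne_zero he P))
  have hd' := zero_lt_iff.mpr (v.ne_zero_iff.mpr (descentValue_ne_zero he (P + P)))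
  rw [max_eq_left (pow_le_pow_left₀ zero_le (hv2.trans hP).le 2), mul_right_comm,
    sq (v (descentValue W e P)), mul_left_inj' hd.ne'] at hmax
  rw [← hmax]
  exact mul_lt_of_lt_one_left hd' (pow_lt_one₀ zero_le hv2 two_ne_zero)

theorem not_isOfFinAddOrder_of_one_lt_valuation [NeZero (2 : F)] (he : W.Nonsingular e 0)
    (hdisc : ¬IsSquare (shiftA W e ^ 2 - 4 * shiftB W e)) (hv2 : v 2 < 1)
    (hA : v (shiftA W e) ≤ v 2 ^ 2) (hB : v (shiftB W e) = v 2 ^ 2) {P : W.Point}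
    (hP : 1 < v (descentValue W e P)) : ¬IsOfFinAddOrder P := by
  have hB1 : v (shiftB W e) < 1 := hB ▸ pow_lt_one₀ zero_le hv2 two_ne_zero
  have hlt {Q : W.Point} (hQ : 1 < v (descentValue W e Q)) :
      v (descentValue W e Q) < v (descentValue W e (Q + Q)) := by
    refine valuation_descentValue_lt_add_self he hv2 hA hB (fun hQQ ↦ ?_) hQ
    rcases (add_self_eq_zero_iff he hdisc).mp hQQ with rfl | rfl
    · simp at hQ
    · exact hQ.not_gt (by rwa [descentValue_some_self])
  have hgt (n : ℕ) : 1 < v (descentValue W e (2 ^ n • P)) := by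
    induction n with
    | zero => simpa using hP
    | succ n ih =>
      rw [pow_succ, mul_nsmul, two_nsmul]
      exact ih.trans (hlt ih)
  have hmono : StrictMono fun n : ℕ ↦ v (descentValue W e (2 ^ n • P)) :=
    strictMono_nat_of_lt_succ fun n ↦ by
      rw [pow_succ, mul_nsmul, two_nsmul]
      exact hlt (hgt n)
  intro hfin
  refine Set.infinite_range_of_injective
    (Function.Injective.of_comp (f := fun Q ↦ v (descentValue W e Q)) hmono.injective)
    ((finite_multiples.mpr hfin).subset ?_)
  rintro _ ⟨n, rfl⟩
  exact ⟨2 ^ n, rfl⟩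

theorem isOfFinAddOrder_iff_of_valuation (he : W.Nonsingular e 0)
    (hdisc : ¬IsSquare (shiftA W e ^ 2 - 4 * shiftB W e)) (hBsq : ¬IsSquare (shiftB W e))
    (hv2 : v 2 < 1) (hv2sq : ¬IsSquare (v 2))
    (hA : v (shiftA W e) ≤ v 2 ^ 2) (hB : v (shiftB W e) = v 2 ^ 2) {P : W.Point} :
    IsOfFinAddOrder P ↔ P = 0 ∨ P = some e 0 he := by
  have : NeZero (2 : F) := ⟨fun h ↦ hv2sq (by rw [h, _root_.map_zero]; exact .zero)⟩
  refine ⟨fun hP ↦ ?_, ?_⟩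
  · have hsq := isSquare_descentValue_add_self he P
    rw [← add_self_eq_zero_iff he hdisc]
    by_cases hPP : P + P + (P + P) = 0
    · refine ((add_self_eq_zero_iff he hdisc).mp hPP).resolve_right fun hT ↦ hBsq ?_
      rwa [hT, descentValue_some_self] at hsq
    · have hne : v (descentValue W e (P + P)) ≠ v 2 := fun h ↦ hv2sq (h ▸ hsq.map v)
      refine absurd ?_ (not_isOfFinAddOrder_of_one_lt_valuation he hdisc hv2 hA hB
        (one_lt_valuation_descentValue_add_self he hv2 hA hB hPP hne))
      exact (hP.add hP).add (hP.add hP)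
  · rintro (rfl | rfl)
    · exact .zero
    · exact isOfFinAddOrder_iff_nsmul_eq_zero.mpr
        ⟨2, two_pos, by rw [two_nsmul, add_self_twoTorsion]⟩

end TwoAdicTorsion

section SquareClasses

theorem isSquare_valuation_of_sq_eq {K Γ₀ : Type*} [Field K] [LinearOrderedCommGroupWithZero Γ₀]
    (v : Valuation K Γ₀) {a b x y : K} (ha : v a ≤ 1) (hb : v b = 1)
    (h : y ^ 2 = x * (x ^ 2 + a * x + b)) : IsSquare (v x) := by
  have hv : v y ^ 2 = v x * v (x ^ 2 + a * x + b) := by rw [← map_pow, h, map_mul]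
  rcases lt_trichotomy (v x) 1 with hx | hx | hx
  · have hsmall : v (x ^ 2 + a * x) < v b := by
      rw [hb, sq, ← add_mul, map_mul]
      exact (mul_le_of_le_one_left' (v.map_add_le hx.le ha)).trans_lt hx
    rw [v.map_add_eq_of_lt_right hsmall, hb, mul_one] at hv
    exact hv ▸ .sq _
  · exact hx ▸ .one
  · have hx0 : v x ≠ 0 := (zero_lt_one.trans hx).ne'
    have hsmall : v (a * x + b) < v (x ^ 2) := by
      refine (v.map_add_le (g := v x) ?_ (hb.trans_le hx.le)).trans_lt ?_
      · rw [map_mul]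
        exact mul_le_of_le_one_left' ha
      · rw [map_pow]
        exact lt_self_pow₀ hx one_lt_two
    rw [add_assoc, v.map_add_eq_of_lt_left hsmall, map_pow] at hv
    exact ⟨v y / v x, by rw [div_mul_div_comm, ← sq, hv]; field_simp⟩

theorem exists_squarefree_mul_sq {q : ℚ} (hq : q ≠ 0) :
    ∃ (d : ℤ) (r : ℚ), Squarefree d ∧ r ≠ 0 ∧ q = d * r ^ 2 := by
  obtain ⟨a, b, hab, ha⟩ := Nat.sq_mul_squarefree (q.num * q.den).natAbs
  obtain ⟨d, hd, hdb⟩ : ∃ d : ℤ, Squarefree d ∧ q.num * q.den = d * b ^ 2 := by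
    have ha' : Squarefree (a : ℤ) := Int.squarefree_natCast.mpr ha
    rcases Int.natAbs_eq (q.num * q.den) with h | h
    · exact ⟨a, ha', by rw [h, ← hab]; push_cast; ring⟩
    · exact ⟨-a, .squarefree_of_dvd (neg_dvd.mpr dvd_rfl) ha', by rw [h, ← hab]; push_cast; ring⟩
  have hden : (q.den : ℚ) ≠ 0 := Nat.cast_ne_zero.mpr q.den_ne_zero
  have hqd : q * (q.den : ℚ) ^ 2 = d * b ^ 2 := by
    rw [sq, ← mul_assoc, Rat.mul_den_eq_num]
    exact_mod_cast hdb
  refine ⟨d, b / q.den, hd, div_ne_zero ?_ hden, ?_⟩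
  · intro hb
    rw [hb] at hqd
    simp_all
  · rw [div_pow, ← mul_div_assoc, ← hqd]
    field_simp

theorem not_isSquare_padicValuation_of_squarefree {p : ℕ} [Fact p.Prime] {d : ℤ}
    (hd : Squarefree d) (hp : (p : ℤ) ∣ d) : ¬IsSquare (Rat.padicValuation p d) := by
  have hprime : Prime (p : ℤ) := Nat.prime_iff_prime_int.mp Fact.out
  obtain ⟨c, rfl⟩ := hp
  have hc : Int.padicValuation p c = 1 := Int.padicValuation_eq_one_iff.mpr fun hc ↦
    hprime.not_isUnit (hd p (mul_dvd_mul_left _ hc))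
  rintro ⟨z, hz⟩
  rw [Rat.padicValuation_cast, map_mul, hc, mul_one, Int.padicValuation_self] at hz
  have hz0 : z ≠ 0 := by
    rintro rfl
    simp at hz
  have := congrArg WithZero.log hz
  rw [WithZero.log_exp, WithZero.log_mul hz0 hz0] at this
  lia

theorem dvd_of_squarefree_of_forall_prime_dvd {d b : ℤ} (hd : Squarefree d)
    (h : ∀ p : ℕ, p.Prime → (p : ℤ) ∣ d → (p : ℤ) ∣ b) : d ∣ b := by
  rw [← Int.natAbs_dvd_natAbs, ← Nat.prod_primeFactors_of_squarefree (Int.squarefree_natAbs.mpr hd)]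
  refine Finset.prod_primes_dvd _ (fun p hp ↦ (Nat.prime_of_mem_primeFactors hp).prime)
    fun p hp ↦ ?_
  exact Int.natCast_dvd.mp (h p (Nat.prime_of_mem_primeFactors hp)
    (Int.natCast_dvd.mpr (Nat.dvd_of_mem_primeFactors hp)))

theorem exists_squarefree_dvd_eq_mul_sq {a b : ℤ} {x y : ℚ} (hx : x ≠ 0)
    (h : y ^ 2 = x * (x ^ 2 + a * x + b)) :
    ∃ (d : ℤ) (r : ℚ), Squarefree d ∧ d ∣ b ∧ x = d * r ^ 2 := by
  obtain ⟨d, r, hd, hr, rfl⟩ := exists_squarefree_mul_sq hx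
  refine ⟨d, r, hd, dvd_of_squarefree_of_forall_prime_dvd hd fun p hp hpd ↦ ?_, rfl⟩
  have := Fact.mk hp
  by_contra hpb
  refine not_isSquare_padicValuation_of_squarefree hd hpd ?_
  have hv := isSquare_valuation_of_sq_eq (Rat.padicValuation p)
    ((Rat.padicValuation_cast p a).trans_le (Int.padicValuation_le_one p a))
    ((Rat.padicValuation_cast p b).trans (Int.padicValuation_eq_one_iff.mpr hpb)) h
  rw [map_mul, map_pow] at hv
  have hr' : Rat.padicValuation p r ≠ 0 := by rwa [Valuation.ne_zero_iff]
  rw [← mul_div_cancel_right₀ (Rat.padicValuation p d) (pow_ne_zero 2 hr')]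
  exact hv.div (.sq _)

theorem exists_dvd_isSquare_mul {a b n : ℤ} {k : ℕ} (hb : b ∣ n ^ k) {x y : ℚ} (hx : x ≠ 0)
    (h : y ^ 2 = x * (x ^ 2 + a * x + b)) : ∃ d : ℤ, d ∣ n ∧ IsSquare (d * x) := by
  obtain ⟨d, r, hd, hdb, rfl⟩ := exists_squarefree_dvd_eq_mul_sq hx h
  exact ⟨d, hd.isRadical k n (hdb.trans hb), d * r, by ring⟩

end SquareClasses

section LocalObstruction

theorem pow_four_dvd_sq_of_pow_three_dvd_sq {R : Type*} [CommMonoidWithZero R] [IsCancelMulZero R]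
    {p u : R} (hp : Prime p) (h : p ^ 3 ∣ u ^ 2) : p ^ 4 ∣ u ^ 2 := by
  obtain ⟨v, rfl⟩ := hp.dvd_of_dvd_pow ((dvd_pow_self p three_ne_zero).trans h)
  rw [mul_pow, pow_succ, mul_dvd_mul_iff_left (pow_ne_zero 2 hp.ne_zero)] at h
  obtain ⟨w, rfl⟩ := hp.dvd_of_dvd_pow h
  exact ⟨w ^ 2, by rw [← mul_assoc, mul_pow, ← sq, ← pow_mul]⟩

variable {p : ℕ} [Fact p.Prime] {B C D : ℤ}

theorem not_isSquare_mul_quartic (hD : ¬IsSquare (D : ZMod p)) (hB : (p : ℤ) ^ 2 ∣ B)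
    (hC : (p : ℤ) ^ 3 ∣ C) (hC' : ¬(p : ℤ) ^ 4 ∣ C) {m n : ℤ} (hmn : IsCoprime m n) :
    ¬IsSquare (D * (m ^ 4 + B * m ^ 2 * n ^ 2 + C * n ^ 4)) := by
  rintro ⟨u, hu⟩
  have hp : Prime (p : ℤ) := Nat.prime_iff_prime_int.mp Fact.out
  have hpD : ¬(p : ℤ) ∣ D := fun hpD ↦ hD <| by
    rw [(ZMod.intCast_zmod_eq_zero_iff_dvd _ _).mpr hpD]
    exact .zero
  have hpm : (p : ℤ) ∣ m := by
    rw [← ZMod.intCast_zmod_eq_zero_iff_dvd]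
    by_contra hm
    have hB0 : (B : ZMod p) = 0 :=
      (ZMod.intCast_zmod_eq_zero_iff_dvd _ _).mpr ((dvd_pow_self _ two_ne_zero).trans hB)
    have hC0 : (C : ZMod p) = 0 :=
      (ZMod.intCast_zmod_eq_zero_iff_dvd _ _).mpr ((dvd_pow_self _ three_ne_zero).trans hC)
    have hmod := congrArg (Int.cast (R := ZMod p)) hu
    push_cast [hB0, hC0] at hmod
    exact hD ⟨u / m ^ 2, by field_simp; linear_combination hmod⟩
  have hpn : ¬(p : ℤ) ∣ n := fun hpn ↦ hp.not_isUnit (hmn.isUnit_of_dvd' hpm hpn)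
  have hmB : (p : ℤ) ^ 4 ∣ D * (m ^ 4 + B * m ^ 2 * n ^ 2) := by
    refine Dvd.dvd.mul_left (dvd_add (pow_dvd_pow_of_dvd hpm 4) (Dvd.dvd.mul_right ?_ _)) D
    rw [show 4 = 2 + 2 from rfl, pow_add]
    exact mul_dvd_mul hB (pow_dvd_pow_of_dvd hpm 2)
  have hu' : u ^ 2 = D * (m ^ 4 + B * m ^ 2 * n ^ 2) + D * n ^ 4 * C := by
    linear_combination -hu
  have hpu : (p : ℤ) ^ 3 ∣ u ^ 2 :=
    hu' ▸ dvd_add ((pow_dvd_pow _ (by norm_num)).trans hmB) (hC.mul_left _)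
  have hpC := (dvd_add_right hmB).mp (hu' ▸ pow_four_dvd_sq_of_pow_three_dvd_sq hp hpu)
  exact hC' (hp.pow_dvd_of_dvd_mul_left 4
    (hp.not_dvd_mul hpD fun h ↦ hpn (hp.dvd_of_dvd_pow h)) hpC)

theorem quartic_ne_mul_sq (hD : ¬IsSquare (D : ZMod p)) (hB : (p : ℤ) ^ 2 ∣ B)
    (hC : (p : ℤ) ^ 3 ∣ C) (hC' : ¬(p : ℤ) ^ 4 ∣ C) (r t : ℚ) :
    r ^ 4 + B * r ^ 2 + C ≠ D * t ^ 2 := by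
  intro h
  refine not_isSquare_mul_quartic hD hB hC hC' (Rat.isCoprime_num_den r)
    (Rat.isSquare_intCast_iff.mp ⟨D * (t * r.den ^ 2), ?_⟩)
  have hden : (r.den : ℚ) ≠ 0 := Nat.cast_ne_zero.mpr r.den_ne_zero
  rw [← r.num_div_den] at h
  field_simp at h
  push_cast
  linear_combination D * h

end LocalObstruction

namespace E576e1

open WeierstrassCurve WeierstrassCurve.Affine WeierstrassCurve.Affine.Point

instance : E576e1.IsCharNeTwoNF :=
  ⟨rfl, rfl⟩

instance : E576e1.IsElliptic := by
  rw [isElliptic_iff, isUnit_iff_ne_zero]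
  norm_num [E576e1, Δ, b₂, b₄, b₆, b₈]

theorem shiftA_eq : shiftA E576e1 (-12) = -36 := by
  norm_num [shiftA, E576e1]

theorem shiftB_eq : shiftB E576e1 (-12) = -108 := by
  norm_num [shiftB, E576e1]

theorem nonsingular_twoTorsion : E576e1.Nonsingular (-12) 0 :=
  equation_iff_nonsingular.mp (by norm_num [equation_iff, E576e1])

theorem nonsingular_descentGenerator : E576e1.Nonsingular (-14) 8 :=
  equation_iff_nonsingular.mp (by norm_num [equation_iff, E576e1])

/-- The rational point of order two. -/
noncomputable def twoTorsion : E576e1.Point :=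
  some (-12) 0 nonsingular_twoTorsion

/-- A point whose square class, together with that of `twoTorsion`, generates the image of the
descent map. -/
noncomputable def descentGenerator : E576e1.Point :=
  some (-14) 8 nonsingular_descentGenerator

theorem descentValue_twoTorsion : descentValue E576e1 (-12) twoTorsion = -108 := by
  rw [twoTorsion, descentValue_some_self, shiftB_eq]

theorem descentValue_descentGenerator : descentValue E576e1 (-12) descentGenerator = -2 := by
  rw [descentGenerator, descentValue_some_of_ne] <;> norm_num

theorem descentValue_descentGenerator_add_twoTorsion :
    descentValue E576e1 (-12) (descentGenerator + twoTorsion) = 54 := by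
  have h := descentValue_mul_add_twoTorsion nonsingular_twoTorsion descentGenerator
  rw [descentValue_descentGenerator, shiftB_eq] at h
  rw [twoTorsion]
  linarith

theorem sq_eq_of_equation {x y : ℚ} (h : E576e1.Equation x y) :
    y ^ 2 = (x + 12) * ((x + 12) ^ 2 + (-36 : ℤ) * (x + 12) + (-108 : ℤ)) := by
  have hxy := (equation_iff_shift nonsingular_twoTorsion.1).mp h
  rw [shiftA_eq, shiftB_eq, sub_neg_eq_add] at hxy
  exact_mod_cast hxy

theorem not_isSquare_neg_descentValue (P : E576e1.Point) :
    ¬IsSquare (-descentValue E576e1 (-12) P) := by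
  rcases P with _ | ⟨x, y, h⟩
  · rw [← zero_def, descentValue_zero]
    norm_num
  by_cases hx : x = -12
  · rw [(some_eq_twoTorsion_iff nonsingular_twoTorsion h).mpr hx, ← twoTorsion,
      descentValue_twoTorsion]
    norm_num
  rw [descentValue_some_of_ne h hx]
  rintro ⟨r, hr⟩
  have hr0 : r ≠ 0 := by
    rintro rfl
    exact hx (by linarith)
  refine quartic_ne_mul_sq (p := 3) (B := 36) (C := -108) (D := -1) (by decide) (by norm_num)
    (by norm_num) (by norm_num) r (y / r) ?_
  have hxy := sq_eq_of_equation h.1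
  obtain rfl : x = -r ^ 2 - 12 := by linarith
  push_cast at hxy ⊢
  field_simp
  linear_combination hxy

theorem int_dvd_six_iff {d : ℤ} :
    d ∣ 6 ↔ d = 1 ∨ d = -1 ∨ d = 2 ∨ d = -2 ∨ d = 3 ∨ d = -3 ∨ d = 6 ∨ d = -6 := by
  refine ⟨fun hd ↦ ?_, by rintro (rfl | rfl | rfl | rfl | rfl | rfl | rfl | rfl) <;> decide⟩
  have hle := Int.le_of_dvd (by norm_num) hd
  have hge := neg_le.mp (Int.le_of_dvd (by norm_num) (neg_dvd.mpr hd))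
  interval_cases d <;> revert hd <;> decide

theorem exists_dvd_six_isSquare_mul_descentValue (P : E576e1.Point) :
    ∃ d : ℤ, d ∣ 6 ∧ IsSquare (d * descentValue E576e1 (-12) P) := by
  rcases P with _ | ⟨x, y, h⟩
  · exact ⟨1, one_dvd _, 1, by rw [← zero_def, descentValue_zero]; norm_num⟩
  by_cases hx : x = -12
  · rw [(some_eq_twoTorsion_iff nonsingular_twoTorsion h).mpr hx, ← twoTorsion,
      descentValue_twoTorsion]
    exact ⟨-3, by norm_num, 18, by norm_num⟩
  rw [descentValue_some_of_ne h hx, sub_neg_eq_add]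
  exact exists_dvd_isSquare_mul (k := 3) (by norm_num) (by rwa [Ne, add_eq_zero_iff_eq_neg])
    (sq_eq_of_equation h.1)

theorem isSquare_mul_descentValue_cases (P : E576e1.Point) :
    IsSquare (descentValue E576e1 (-12) P) ∨ IsSquare (-108 * descentValue E576e1 (-12) P) ∨
      IsSquare (-2 * descentValue E576e1 (-12) P) ∨
      IsSquare (54 * descentValue E576e1 (-12) P) := by
  have hchange {a b : ℚ} (c : ℚ) {Q : E576e1.Point} (hb : b = c ^ 2 * a)
      (h : IsSquare (a * descentValue E576e1 (-12) Q)) :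
      IsSquare (b * descentValue E576e1 (-12) Q) := by
    rw [hb, mul_assoc]
    exact (IsSquare.sq c).mul h
  have hexcl {a b : ℚ} (c : ℚ) {Q : E576e1.Point}
      (hQ : IsSquare (b * descentValue E576e1 (-12) Q)) (hc : -1 = c ^ 2 * (a * b)) :
      ¬IsSquare (a * descentValue E576e1 (-12) P) := fun hP ↦
    not_isSquare_neg_descentValue (P + Q) <| neg_one_mul (descentValue E576e1 (-12) (P + Q)) ▸
      hchange c hc (isSquare_mul_descentValue_add nonsingular_twoTorsion hP hQ)
  obtain ⟨d, hd, hP⟩ := exists_dvd_six_isSquare_mul_descentValue P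
  rcases int_dvd_six_iff.mp hd with rfl | rfl | rfl | rfl | rfl | rfl | rfl | rfl <;>
    push_cast at hP
  · exact .inl (one_mul (descentValue E576e1 (-12) P) ▸ hP)
  · exact absurd (neg_one_mul (descentValue E576e1 (-12) P) ▸ hP) (not_isSquare_neg_descentValue P)
  · refine absurd hP (hexcl (1 / 2) (b := -2) (Q := descentGenerator) ?_ (by norm_num))
    exact ⟨2, by rw [descentValue_descentGenerator]; norm_num⟩
  · exact .inr (.inr (.inl hP))
  · refine absurd hP (hexcl (1 / 18) (b := -108) (Q := twoTorsion) ?_ (by norm_num))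
    exact ⟨108, by rw [descentValue_twoTorsion]; norm_num⟩
  · exact .inr (.inl (hchange 6 (by norm_num) hP))
  · exact .inr (.inr (.inr (hchange 3 (by norm_num) hP)))
  · refine absurd hP (hexcl (1 / 18) (b := 54) (Q := descentGenerator + twoTorsion) ?_
      (by norm_num))
    exact ⟨54, by rw [descentValue_descentGenerator_add_twoTorsion]⟩

theorem not_isSquare_two_mul_of_quadratic_eq {r u : ℚ} (hu : u ≠ 0)
    (h : u ^ 2 + 72 * u + 1728 = 4 * r ^ 2 * u) : ¬IsSquare (2 * u) := by
  rintro ⟨c, hc⟩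
  refine quartic_ne_mul_sq (p := 3) (B := 36) (C := 432) (D := 2) (by decide) (by norm_num)
    (by norm_num) (by norm_num) (c / 2) (r * c / 2) ?_
  obtain rfl : u = c ^ 2 / 2 := by linarith
  push_cast
  linear_combination h / 4

theorem isSquare_or_isSquare_three_mul_of_quadratic_eq {r u : ℚ} (hr : r ≠ 0) (hu : u ≠ 0)
    (h : u ^ 2 + 72 * u + 1728 = 4 * r ^ 2 * u) : IsSquare u ∨ IsSquare (3 * u) := by
  have hpos : 0 < u := by
    refine pos_of_mul_pos_right (a := 4 * r ^ 2) ?_ (by positivity)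
    rw [← h]
    nlinarith [sq_nonneg (u + 36)]
  obtain ⟨d, hd, hdu⟩ := exists_dvd_isSquare_mul (a := 72) (b := 1728) (n := 6) (k := 6)
    (by norm_num) hu (y := 2 * r * u) (by push_cast; linear_combination -u * h)
  have hd0 : 0 ≤ d := by
    exact_mod_cast nonneg_of_mul_nonneg_left hdu.nonneg hpos
  rcases int_dvd_six_iff.mp hd with rfl | rfl | rfl | rfl | rfl | rfl | rfl | rfl <;>
    first | (exact absurd hd0 (by decide)) | push_cast at hdu
  · exact .inl (one_mul u ▸ hdu)
  · exact absurd hdu (not_isSquare_two_mul_of_quadratic_eq hu h)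
  · exact .inr hdu
  · -- The equation is invariant under `u ↦ 1728 / u`, which exchanges the classes `2` and `6`.
    refine absurd ?_ (not_isSquare_two_mul_of_quadratic_eq (r := r) (u := 1728 / u)
      (by positivity) ?_)
    · have : 2 * (1728 / u) = 144 ^ 2 / (6 * u) := by field_simp; norm_num
      exact this ▸ (IsSquare.sq _).div hdu
    · field_simp
      linear_combination h

theorem exists_sq_eq_of_quartic {r s : ℚ} (hr : r ≠ 0) (h : s ^ 2 = r ^ 4 - 36 * r ^ 2 - 108) :
    ∃ w : ℚ, w ≠ 0 ∧ (w ^ 2 = 2 * r ^ 2 - 36 + 2 * s ∨ w ^ 2 = 2 * r ^ 2 - 36 - 2 * s) := by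
  have huv : (2 * r ^ 2 - 36 + 2 * s) * (2 * r ^ 2 - 36 - 2 * s) = 1728 := by
    linear_combination -4 * h
  set u := 2 * r ^ 2 - 36 + 2 * s with hudef
  have hu : u ≠ 0 := by
    intro hu
    rw [hu, zero_mul] at huv
    norm_num at huv
  have hquad : u ^ 2 + 72 * u + 1728 = 4 * r ^ 2 * u := by
    rw [hudef]
    linear_combination 4 * h
  rcases isSquare_or_isSquare_three_mul_of_quadratic_eq hr hu hquad with ⟨w, hw⟩ | ⟨w, hw⟩
  · have hw0 : w ≠ 0 := left_ne_zero_of_mul (hw ▸ hu)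
    exact ⟨w, hw0, .inl (by rw [sq, hw])⟩
  · have hw0 : w ≠ 0 := left_ne_zero_of_mul (hw ▸ mul_ne_zero three_ne_zero hu)
    refine ⟨72 / w, div_ne_zero (by norm_num) hw0, .inr ?_⟩
    rw [div_pow, sq w, ← hw]
    field_simp
    linear_combination -3 * huv

theorem exists_two_nsmul_eq_of_isSquare {P : E576e1.Point}
    (hP : IsSquare (descentValue E576e1 (-12) P)) : ∃ S : E576e1.Point, 2 • S = P := by
  rcases P with _ | ⟨x, y, h⟩
  · exact ⟨0, nsmul_zero 2⟩
  have hx : x ≠ -12 := by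
    intro hx
    rw [(some_eq_twoTorsion_iff nonsingular_twoTorsion h).mpr hx, ← twoTorsion,
      descentValue_twoTorsion] at hP
    revert hP
    norm_num
  rw [descentValue_some_of_ne h hx] at hP
  obtain ⟨r, hr⟩ := hP
  have hr0 : r ≠ 0 := left_ne_zero_of_mul (hr ▸ sub_ne_zero.mpr hx)
  rw [← sq] at hr
  obtain ⟨s, hs⟩ : ∃ s, y = r * s := ⟨y / r, (mul_div_cancel₀ y hr0).symm⟩
  have hquartic := sq_eq_quartic nonsingular_twoTorsion.1 h.1 hr0 hr hs
  rw [shiftA_eq, shiftB_eq, neg_mul, ← sub_eq_add_neg, ← sub_eq_add_neg] at hquartic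
  obtain ⟨w, hw0, hw | hw⟩ := exists_sq_eq_of_quartic hr0 hquartic
  · refine exists_two_nsmul_eq_some nonsingular_twoTorsion h hr0 hw0 hr hs ?_
    rw [shiftA_eq, hw, sub_eq_add_neg]
  · refine exists_two_nsmul_eq_some nonsingular_twoTorsion h (r := -r) (s := -s)
      (neg_ne_zero.mpr hr0) hw0 (by rw [hr, neg_sq]) (by rw [hs, neg_mul_neg]) ?_
    rw [shiftA_eq, hw]
    ring

theorem range_two_nsmul_eq_ker_descentHom :
    (nsmulAddMonoidHom (α := E576e1.Point) 2).range =
      (descentHom nonsingular_twoTorsion).ker := by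
  ext P
  have hker : P ∈ (descentHom nonsingular_twoTorsion).ker ↔
      IsSquare (descentValue E576e1 (-12) P) := by
    rw [AddMonoidHom.mem_ker, ← _root_.map_zero (descentHom nonsingular_twoTorsion),
      descentHom_eq_iff, descentValue_zero, mul_one]
  rw [hker]
  refine ⟨?_, exists_two_nsmul_eq_of_isSquare⟩
  rintro ⟨S, rfl⟩
  rw [nsmulAddMonoidHom_apply, two_nsmul]
  exact isSquare_descentValue_add_self nonsingular_twoTorsion S

theorem coe_range_descentHom :
    ((descentHom nonsingular_twoTorsion).range : Set (Additive (ℚˣ ⧸ Subgroup.square ℚˣ))) =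
      descentHom nonsingular_twoTorsion ''
        {0, twoTorsion, descentGenerator, descentGenerator + twoTorsion} := by
  refine Set.Subset.antisymm ?_ (Set.image_subset_range _ _)
  rintro _ ⟨P, rfl⟩
  rcases isSquare_mul_descentValue_cases P with h | h | h | h
  · exact ⟨0, by simp, (descentHom_eq_iff _).mpr (by rwa [descentValue_zero, one_mul])⟩
  · exact ⟨twoTorsion, by simp, (descentHom_eq_iff _).mpr (by rwa [descentValue_twoTorsion])⟩
  · exact ⟨descentGenerator, by simp,
      (descentHom_eq_iff _).mpr (by rwa [descentValue_descentGenerator])⟩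
  · exact ⟨descentGenerator + twoTorsion, by simp,
      (descentHom_eq_iff _).mpr (by rwa [descentValue_descentGenerator_add_twoTorsion])⟩

theorem card_range_descentHom : Nat.card (descentHom nonsingular_twoTorsion).range = 4 := by
  rw [← SetLike.coe_sort_coe, Nat.card_coe_set_eq, coe_range_descentHom]
  simp only [Set.image_insert_eq, Set.image_singleton]
  rw [Set.ncard_insert_of_notMem, Set.ncard_insert_of_notMem, Set.ncard_pair] <;>
    simp only [Set.mem_insert_iff, Set.mem_singleton_iff, Ne, descentHom_eq_iff, descentValue_zero,
      descentValue_twoTorsion, descentValue_descentGenerator,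
      descentValue_descentGenerator_add_twoTorsion] <;>
    norm_num

theorem index_range_two_nsmul : (nsmulAddMonoidHom (α := E576e1.Point) 2).range.index = 4 := by
  rw [range_two_nsmul_eq_ker_descentHom, AddSubgroup.index_ker, card_range_descentHom]

theorem isOfFinAddOrder_iff {P : E576e1.Point} : IsOfFinAddOrder P ↔ P = 0 ∨ P = twoTorsion := by
  have hval {q : ℚ} (k : ℤ) (hq : q = 2 ^ 2 * k) :
      Rat.padicValuation 2 q = Rat.padicValuation 2 2 ^ 2 * Int.padicValuation 2 k := by
    rw [hq, map_mul, map_pow, Rat.padicValuation_cast]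
  have hv2 : Rat.padicValuation 2 2 < 1 := by
    have := Rat.padicValuation_self (p := 2)
    rw [Nat.cast_ofNat] at this
    rw [this]
    exact WithZero.exp_lt_exp.mpr (by norm_num)
  have hv2sq : ¬IsSquare (Rat.padicValuation 2 2) :=
    not_isSquare_padicValuation_of_squarefree (d := 2) Int.prime_two.squarefree dvd_rfl
  refine isOfFinAddOrder_iff_of_valuation nonsingular_twoTorsion ?_ ?_ hv2 hv2sq ?_ ?_
  · rw [shiftA_eq, shiftB_eq]
    norm_num
  · rw [shiftB_eq]
    norm_num
  · rw [shiftA_eq, hval (-9) (by norm_num)]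
    exact mul_le_of_le_one_right' (Int.padicValuation_le_one 2 _)
  · rw [shiftB_eq, hval (-27) (by norm_num), Int.padicValuation_eq_one_iff.mpr (by norm_num),
      mul_one]

theorem card_torsion : Nat.card (AddCommGroup.torsion E576e1.Point) = 2 := by
  have hset : (AddCommGroup.torsion E576e1.Point : Set E576e1.Point) = {0, twoTorsion} :=
    Set.ext fun _ ↦ (AddCommGroup.mem_torsion _).trans isOfFinAddOrder_iff
  rw [← SetLike.coe_sort_coe, Nat.card_coe_set_eq, hset, Set.ncard_pair]
  exact (some_ne_zero nonsingular_twoTorsion).symm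

end E576e1

/-- The Mordell–Weil group `E(ℚ)` of the elliptic curve
`y² = x³ − 540x − 4752` over `ℚ` (LMFDB 576.e1) is isomorphic as an abelian group to
`ℤ × ℤ/2ℤ`. -/
theorem mordellWeil_576e1 : Nonempty (E576e1.Point ≃+ ℤ × ZMod 2) := by
  have hindex := E576e1.index_range_two_nsmul
  have : AddGroup.FG E576e1.Point :=
    fg_of_finiteIndex_range_two_nsmul ⟨by rw [hindex]; norm_num⟩
  obtain ⟨f⟩ := nonempty_addEquiv_pi_prod_zmod (r := 1) E576e1.card_torsion hindex
  exact ⟨f.trans (.prodCongr (.funUnique (Fin 1) ℤ) (.refl _))⟩
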